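/- Alignment Theorem, part 1 (existence of a bootstrapped-return representation): Suppose ⪰ is a binary relation on ℒ∞ and ⪰∂ is a binary relation on partial trajectories such that (Axiom 1) some reward function r* : S × A → ℝ expresses ⪰, and (Axiom 2) there exist a policy π and a transition matrix P with (π,P) unichain, together with a Markov prefix family (ℓ_h) for (π,P) with ℓ_h ∈ ℒ∞ for every partial trajectory h, such that for all partial trajectories h, h': h ⪰∂ h' iff ℓ_h ⪰ ℓ_{h'}. Then there exist functions r : S × A → ℝ and V : S → ℝ such that for all partial trajectories h, h': h ⪰∂ h' iff B(r,V)(h) ≥ B(r,V)(h'). -/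

import Mathlib

open MeasureTheory Filter Finset Topology

noncomputable section

/-- The trajectory space uses the discrete (⊤) σ-algebra on `S × A`. -/
instance discreteMS (S A : Type) : MeasurableSpace (S × A) := ⊤

variable {S A : Type} [Fintype S] [DecidableEq S] [Fintype A] [DecidableEq A]
  [Nonempty S] [Nonempty A]

/-- A policy assigns to each state a probability distribution over actions. -/
def IsPolicy (π : S → A → ℝ) : Prop :=
  (∀ s a, 0 ≤ π s a) ∧ ∀ s, ∑ a, π s a = 1

/-- A transition matrix assigns to each action and state a probability distribution
over next states. -/
def IsTransition (P : A → S → S → ℝ) : Prop :=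
  (∀ a s s', 0 ≤ P a s s') ∧ ∀ a s, ∑ s', P a s s' = 1

/-- The state-transition matrix induced by a policy and a transition matrix. -/
def Mmat (π : S → A → ℝ) (P : A → S → S → ℝ) : Matrix S S ℝ :=
  Matrix.of fun s s' => ∑ a, π s a * P a s s'

/-- `(π, P)` is unichain: for every `s'`, the Cesàro averages of `(M(π,P)^t)(s,s')`
converge to a limit `μ s'` that does not depend on `s`. -/
def Unichain (π : S → A → ℝ) (P : A → S → S → ℝ) : Prop :=
  ∃ μ : S → ℝ, ∀ s s',
    Tendsto (fun T : ℕ => (∑ t ∈ range T, (Mmat π P ^ t) s s') / (T : ℝ))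
      atTop (𝓝 (μ s'))

/-- The bootstrapped return of a partial trajectory `h = (pairs, z)`. -/
def Breturn (r : S × A → ℝ) (V : S → ℝ) (h : List (S × A) × S) : ℝ :=
  (h.1.map r).sum + V h.2

/-- Membership in `ℒ∞`: a probability measure on the trajectory space `ℕ → S × A`
such that for every state `s` the relative state frequencies converge. -/
def MemLinf (ℓ : Measure (ℕ → S × A)) : Prop :=
  IsProbabilityMeasure ℓ ∧
    ∀ s : S, ∃ c : ℝ,
      Tendsto (fun T : ℕ => (∑ t ∈ range T, (ℓ {ω | (ω t).1 = s}).toReal) / (T : ℝ))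
        atTop (𝓝 c)

/-- The expected discounted return `v(ℓ,r,γ)` of a lottery `ℓ`. -/
def vdisc (ℓ : Measure (ℕ → S × A)) (r : S × A → ℝ) (γ : ℝ) : ℝ :=
  ∑' t : ℕ, γ ^ t * ∫ ω, r (ω t) ∂ℓ

/-- A reward function `r` expresses the preference relation `pref` on `ℒ∞`:
`ℓ ⪰ ℓ'` iff `γ ↦ v(ℓ,r,γ) − v(ℓ',r,γ)` converges, as `γ → 1⁻`, to a limit `≥ 0`. -/
def Expresses (r : S × A → ℝ)
    (pref : Measure (ℕ → S × A) → Measure (ℕ → S × A) → Prop) : Prop :=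
  ∀ ℓ ℓ', MemLinf ℓ → MemLinf ℓ' →
    (pref ℓ ℓ' ↔ ∃ c : ℝ, 0 ≤ c ∧
      Tendsto (fun γ : ℝ => vdisc ℓ r γ - vdisc ℓ' r γ) (𝓝[<] (1 : ℝ)) (𝓝 c))

/-- A family `(ℓ_h)` of probability measures on the trajectory space, indexed by partial
trajectories, is a Markov prefix family for `(π,P)`: the measure of any cylinder set of
length `n ≥ T` is the indicator that the cylinder agrees with `h`, times
`π(x_T)(b_T) · ∏_{k=T}^{n−1} P(b_k)(x_k)(x_{k+1}) · π(x_{k+1})(b_{k+1})`. -/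
def IsMarkovPrefixFamily (π : S → A → ℝ) (P : A → S → S → ℝ)
    (L : List (S × A) × S → Measure (ℕ → S × A)) : Prop :=
  ∀ (l : List (S × A)) (z : S) (n : ℕ), l.length ≤ n → ∀ x : ℕ → S × A,
    (L (l, z) {ω | ∀ k ≤ n, ω k = x k}).toReal =
      (if (∀ t : Fin l.length, x t = l.get t) ∧ (x l.length).1 = z then (1 : ℝ) else 0) *
        (π (x l.length).1 (x l.length).2 *
          ∏ k ∈ Finset.Ico l.length n,
            (P (x k).2 (x k).1 (x (k + 1)).1 * π (x (k + 1)).1 (x (k + 1)).2))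

/-!
Let `M` be the state-transition matrix of `(π, P)`. Its Cesàro limit `p` is an idempotent with
`M * p = p = p * M`, so `(1 - γ M)⁻¹ = (1 - γ)⁻¹ p + D + o(1)` as `γ → 1`, where `D` is the
deviation matrix. Since `(π, P)` is unichain, all rows of `p` equal one vector `μ`, so that the
gain `ρ = μ · r_π` does not depend on the initial state; here `r_π` is the policy average of the
reward `r*`. Along a prefix `h` that ends in `z`, the discounted value of `ℓ_h` is therefore
`ρ / (1 - γ) + ∑ (r* - ρ) + (D r_π)(z) + o(1)`: the correction `-ρ` for each pair of the prefix is
the delay of the tail in the divergent term. That term cancels in differences, which leaves the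
bootstrapped returns for the reward `r* - ρ` and the bias `D r_π`.
-/

open scoped Ring Matrix

lemma inverse_sub_smul_of_isIdempotentElem {K R : Type*} [Field K] [Ring R] [Algebra K R]
    {u p : R} (hu : IsUnit u) (hp : IsIdempotentElem p) (hup : u * p = p) (hpu : p * u = p)
    {t : K} (ht : t ≠ 1) : (u - t • p)⁻¹ʳ = u⁻¹ʳ + (t / (1 - t)) • p := by
  obtain ⟨u, rfl⟩ := hu
  have hu'p : (↑u⁻¹ : R) * p = p := by rw [Units.inv_mul_eq_iff_eq_mul, hup]
  have hpu' : p * (↑u⁻¹ : R) = p := by rw [Units.mul_inv_eq_iff_eq_mul, hpu]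
  have hscalar : t / (1 - t) = t + t * (t / (1 - t)) := by
    have := sub_ne_zero.2 ht.symm
    field_simp
    ring
  rw [Ring.inverse_unit]
  refine Ring.inverse_unit ⟨u - t • p, ↑u⁻¹ + (t / (1 - t)) • p, ?_, ?_⟩
  · simp only [sub_mul, mul_add, smul_mul_assoc, mul_smul_comm, Units.mul_inv, hup, hpu', hp.eq]
    linear_combination (norm := module) hscalar • p
  · simp only [add_mul, mul_sub, smul_mul_assoc, mul_smul_comm, Units.inv_mul, hpu, hu'p, hp.eq]
    linear_combination (norm := module) hscalar • p

section CesaroLimit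

variable {R : Type*} [Ring R] [Algebra ℝ R]

/-- The `T`-th Cesàro mean of the powers of `a`, which is `0` for `T = 0`. -/
def cesaroMean (a : R) (T : ℕ) : R :=
  (T : ℝ)⁻¹ • ∑ t ∈ range T, a ^ t

lemma cesaroMean_mul_eq_self {a p : R} (h : a * p = p) {T : ℕ} (hT : T ≠ 0) :
    cesaroMean a T * p = p := by
  have hpow (t : ℕ) : a ^ t * p = p := by
    induction t with
    | zero => rw [pow_zero, one_mul]
    | succ t ih => rw [pow_succ, mul_assoc, h, ih]
  rw [cesaroMean, smul_mul_assoc, sum_mul, sum_congr rfl fun t _ => hpow t, sum_const, card_range,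
    ← Nat.cast_smul_eq_nsmul ℝ, inv_smul_smul₀ (Nat.cast_ne_zero.2 hT)]

lemma exists_one_sub_mul_eq_one_sub_cesaroMean (a : R) {T : ℕ} (hT : T ≠ 0) :
    ∃ g, (1 - a) * g = 1 - cesaroMean a T ∧ ∀ b, Commute b a → Commute b g := by
  refine ⟨(T : ℝ)⁻¹ • ∑ t ∈ range T, ∑ i ∈ range t, a ^ i, ?_, fun b hb => ?_⟩
  · rw [mul_smul_comm, mul_sum, sum_congr rfl fun t _ => mul_neg_geom_sum a t, sum_sub_distrib,
      sum_const, card_range, smul_sub, ← Nat.cast_smul_eq_nsmul ℝ,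
      inv_smul_smul₀ (Nat.cast_ne_zero.2 hT), cesaroMean]
  · exact (Commute.sum_right _ _ _ fun t _ => Commute.sum_right _ _ _ fun i _ =>
      hb.pow_right i).smul_right _

/-- The deviation operator of `a`, where `p` is its Cesàro limit. For a stochastic matrix it is
Kemeny and Snell's fundamental matrix minus `p`, and maps a reward to its bias. -/
def deviation (a p : R) : R :=
  (1 - a + p)⁻¹ʳ - p

variable [TopologicalSpace R]

/-- The Cesàro means of the powers of `a` converge to `p`. For a stochastic matrix, `p` is the
matrix of long-run state frequencies. -/
def IsCesaroLimit (a p : R) : Prop :=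
  Tendsto (cesaroMean a) atTop (𝓝 p)

namespace IsCesaroLimit

variable {a p : R}

lemma tendsto_inv_smul_pow [ContinuousSub R] [ContinuousSMul ℝ R] (h : IsCesaroLimit a p) :
    Tendsto (fun T : ℕ => (T : ℝ)⁻¹ • a ^ T) atTop (𝓝 0) := by
  have hcoef : Tendsto (fun T : ℕ => 1 + (T : ℝ)⁻¹) atTop (𝓝 1) := by
    simpa using tendsto_inv_atTop_nhds_zero_nat.const_add (1 : ℝ)
  have hdiff := (hcoef.smul (h.comp (tendsto_add_atTop_nat 1))).sub h
  rw [one_smul, sub_self] at hdiff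
  refine hdiff.congr' ?_
  filter_upwards [eventually_ne_atTop 0] with T hT
  have hT' : (1 + (T : ℝ)⁻¹) * ((T + 1 : ℕ) : ℝ)⁻¹ = (T : ℝ)⁻¹ := by
    push_cast
    field_simp
  rw [Function.comp_apply, cesaroMean, cesaroMean, smul_smul, hT', sum_range_succ, smul_add,
    add_sub_cancel_left]

variable [IsTopologicalRing R] [ContinuousSMul ℝ R]

lemma tendsto_inv_smul_pow_sub_one (h : IsCesaroLimit a p) :
    Tendsto (fun T : ℕ => (T : ℝ)⁻¹ • (a ^ T - 1)) atTop (𝓝 0) := by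
  simpa [smul_sub] using h.tendsto_inv_smul_pow.sub
    ((tendsto_inv_atTop_nhds_zero_nat (𝕜 := ℝ)).smul_const (1 : R))

variable [T2Space R]

lemma mul_right_eq (h : IsCesaroLimit a p) : a * p = p := by
  have hlim : (a - 1) * p = 0 := by
    refine tendsto_nhds_unique (Tendsto.const_mul (a - 1) h)
      (h.tendsto_inv_smul_pow_sub_one.congr fun T => ?_)
    rw [cesaroMean, mul_smul_comm, mul_geom_sum]
  rwa [sub_mul, one_mul, sub_eq_zero] at hlim

lemma mul_left_eq (h : IsCesaroLimit a p) : p * a = p := by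
  have hlim : p * (a - 1) = 0 := by
    refine tendsto_nhds_unique (Tendsto.mul_const (a - 1) h)
      (h.tendsto_inv_smul_pow_sub_one.congr fun T => ?_)
    rw [cesaroMean, smul_mul_assoc, geom_sum_mul]
  rwa [mul_sub, mul_one, sub_eq_zero] at hlim

lemma isIdempotentElem (h : IsCesaroLimit a p) : IsIdempotentElem p := by
  refine tendsto_nhds_unique (Tendsto.mul_const p h) (tendsto_const_nhds.congr' ?_)
  filter_upwards [eventually_ne_atTop 0] with T hT using
    (cesaroMean_mul_eq_self h.mul_right_eq hT).symm

end IsCesaroLimit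

end CesaroLimit

section UniformErgodic

variable {R : Type*} [NormedRing R] [NormedAlgebra ℝ R] [CompleteSpace R] {a p : R}

/- Writing `1 - cesaroMean a T = (1 - a) * g`, the product `(1 - a + p) * (g * (1 - p) + p)` is
`1 - cesaroMean a T + p`, which is close to `1`. -/
lemma IsCesaroLimit.isUnit_one_sub_add (h : IsCesaroLimit a p) : IsUnit (1 - a + p) := by
  have hnear : Tendsto (fun T => 1 - cesaroMean a T + p) atTop (𝓝 1) := by
    simpa using (Tendsto.const_sub 1 h).add_const p
  obtain ⟨T, hunit, hT⟩ := ((hnear.eventually_mem (Units.isOpen.mem_nhds isUnit_one)).and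
    (eventually_ne_atTop 0)).exists
  obtain ⟨g, hg, hcomm⟩ := exists_one_sub_mul_eq_one_sub_cesaroMean a hT
  have hpa : Commute p a := h.mul_left_eq.trans h.mul_right_eq.symm
  have hpg : Commute p g := hcomm p hpa
  have hag : Commute a g := hcomm a (Commute.refl a)
  have hfactor : (1 - a + p) * (g * (1 - p) + p) = 1 - cesaroMean a T + p := by
    have hmean := cesaroMean_mul_eq_self h.mul_right_eq hT
    calc (1 - a + p) * (g * (1 - p) + p)
        = (1 - a) * g * (1 - p) + p * g * (1 - p) + (p - a * p) + p * p := by noncomm_ring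
      _ = (1 - cesaroMean a T) * (1 - p) + g * (p * (1 - p)) + p := by
        rw [hg, hpg.eq, h.mul_right_eq, h.isIdempotentElem.eq, sub_self, add_zero, mul_assoc]
      _ = 1 - cesaroMean a T - p + cesaroMean a T * p + p := by
        rw [h.isIdempotentElem.mul_one_sub_self]; noncomm_ring
      _ = 1 - cesaroMean a T + p := by rw [hmean]; abel
  have hcommute : Commute (1 - a + p) (g * (1 - p) + p) := by
    have hg' : Commute (1 - a + p) g := ((Commute.one_left g).sub_left hag).add_left hpg
    have hp' : Commute (1 - a + p) p :=
      ((Commute.one_left p).sub_left hpa.symm).add_left (Commute.refl p)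
    exact (hg'.mul_right ((Commute.one_right _).sub_right hp')).add_right hp'
  exact (hcommute.isUnit_mul_iff.1 (hfactor ▸ hunit)).1

lemma IsCesaroLimit.tendsto_inverse_one_sub_smul (h : IsCesaroLimit a p) :
    Tendsto (fun γ : ℝ => (1 - γ • a)⁻¹ʳ - (1 - γ)⁻¹ • p) (𝓝[≠] 1)
      (𝓝 (deviation a p)) := by
  obtain ⟨u, hu⟩ := h.isUnit_one_sub_add
  have hreg : Tendsto (fun γ : ℝ => 1 - γ • a + γ • p) (𝓝[≠] 1) (𝓝 ↑u) := by
    have hcont : Continuous fun γ : ℝ => 1 - γ • a + γ • p := by fun_prop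
    simpa [hu] using (hcont.tendsto 1).mono_left nhdsWithin_le_nhds
  rw [deviation, ← hu]
  refine (((NormedRing.inverse_continuousAt u).tendsto.comp hreg).sub_const p).congr' ?_
  filter_upwards [hreg.eventually_mem (Units.isOpen.mem_nhds u.isUnit), self_mem_nhdsWithin]
    with γ hunit hγ
  have hleft : (1 - γ • a + γ • p) * p = p := by
    simp only [add_mul, sub_mul, one_mul, smul_mul_assoc, h.mul_right_eq, h.isIdempotentElem.eq,
      sub_add_cancel]
  have hright : p * (1 - γ • a + γ • p) = p := by
    simp only [mul_add, mul_sub, mul_one, mul_smul_comm, h.mul_left_eq, h.isIdempotentElem.eq,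
      sub_add_cancel]
  have hscalar : γ / (1 - γ) - (1 - γ)⁻¹ = -1 := by
    have := sub_ne_zero.2 (Ne.symm hγ)
    field_simp
    ring
  have hinv := inverse_sub_smul_of_isIdempotentElem hunit h.isIdempotentElem hleft hright hγ
  rw [add_sub_cancel_right] at hinv
  rw [hinv, add_sub_assoc, ← sub_smul, hscalar, neg_one_smul, ← sub_eq_add_neg,
    Function.comp_apply]

end UniformErgodic

section StochasticMatrix

open Matrix
open scoped Matrix.Norms.Operator

variable {n : Type*} [Fintype n] [DecidableEq n] {M : Matrix n n ℝ}

lemma linfty_opNorm_le_one_of_mem_rowStochastic (hM : M ∈ rowStochastic ℝ n) : ‖M‖ ≤ 1 := by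
  rw [linfty_opNorm_def, NNReal.coe_le_one, Finset.sup_le_iff]
  intro i _
  rw [← NNReal.coe_le_one, NNReal.coe_sum]
  simp only [coe_nnnorm, Real.norm_eq_abs, abs_of_nonneg (nonneg_of_mem_rowStochastic hM),
    sum_row_of_mem_rowStochastic hM, le_refl]

lemma hasSum_pow_mul_pow_mulVec (hM : M ∈ rowStochastic ℝ n) {γ : ℝ} (hγ : |γ| < 1)
    (f : n → ℝ) (z : n) :
    HasSum (fun k : ℕ => γ ^ k * (M ^ k *ᵥ f) z) (((1 - γ • M)⁻¹ʳ *ᵥ f) z) := by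
  have hnorm : ‖γ • M‖ < 1 := by
    rw [norm_smul, Real.norm_eq_abs]
    exact (mul_le_of_le_one_right (abs_nonneg γ)
      (linfty_opNorm_le_one_of_mem_rowStochastic hM)).trans_lt hγ
  have hcont : Continuous fun N : Matrix n n ℝ => N *ᵥ f :=
    continuous_id.matrix_mulVec continuous_const
  have hsum := (hasSum_geom_series_inverse (γ • M) hnorm).map (mulVec.addMonoidHomLeft f) hcont
  refine (Pi.hasSum.1 hsum z).congr_fun fun k => ?_
  simp only [mulVec.addMonoidHomLeft_apply, Function.comp_apply, smul_pow, smul_mulVec,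
    Pi.smul_apply, smul_eq_mul]

lemma IsCesaroLimit.tendsto_inverse_mulVec_sub {μ : n → ℝ}
    (h : IsCesaroLimit M (replicateRow n μ)) (f : n → ℝ) (z : n) :
    Tendsto (fun γ : ℝ => ((1 - γ • M)⁻¹ʳ *ᵥ f) z - μ ⬝ᵥ f / (1 - γ)) (𝓝[≠] 1)
      (𝓝 ((deviation M (replicateRow n μ) *ᵥ f) z)) := by
  have hcont : Continuous fun N : Matrix n n ℝ => (N *ᵥ f) z :=
    (continuous_apply z).comp (continuous_id.matrix_mulVec continuous_const)
  refine ((hcont.tendsto _).comp h.tendsto_inverse_one_sub_smul).congr fun γ => ?_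
  simp only [Function.comp_apply, sub_mulVec, smul_mulVec, Pi.sub_apply, Pi.smul_apply,
    smul_eq_mul, replicateRow_mulVec_eq_const, Function.const_apply, div_eq_inv_mul]

end StochasticMatrix

section Cylinder

open PiNat Function

variable {E : Type*} {x y : ℕ → E}

lemma disjoint_cylinder_of_ne {n k : ℕ} (hk : k < n) (hxy : x k ≠ y k) :
    Disjoint (cylinder x n) (cylinder y n) :=
  Set.disjoint_left.2 fun _ hx hy => hxy ((hx k hk).symm.trans (hy k hk))

/-- The path that follows the list `l` and then stays at `e`. -/
def prefixPath (l : List E) (e : E) (k : ℕ) : E :=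
  l.getD k e

lemma prefixPath_val (l : List E) (e : E) (t : Fin l.length) : prefixPath l e t = l.get t :=
  List.getD_eq_get l e t

lemma prefixPath_length (l : List E) (e : E) : prefixPath l e l.length = e :=
  List.getD_eq_default l e le_rfl

lemma pairwise_disjoint_cylinder_prefixPath {ι : Type*} {e : ι → E} (he : Injective e)
    (l : List E) : Pairwise (Disjoint on fun i => cylinder (prefixPath l (e i)) (l.length + 1)) :=
  fun i j hij => disjoint_cylinder_of_ne l.length.lt_succ_self (by
    simpa only [prefixPath_length] using he.ne hij)

variable [MeasurableSpace E]

lemma measurableSet_cylinder [MeasurableSingletonClass E] (x : ℕ → E) (n : ℕ) :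
    MeasurableSet (cylinder x n) := by
  rw [cylinder_eq_pi]
  exact MeasurableSet.pi (Finset.countable_toSet _) fun i _ => measurableSet_singleton (x i)

variable {ℓ : Measure (ℕ → E)}

lemma setIntegral_cylinder_eq_sum [Fintype E] [MeasurableSingletonClass E] {g : (ℕ → E) → ℝ}
    (hg : Integrable g ℓ) (x : ℕ → E) (n : ℕ) :
    ∫ ω in cylinder x n, g ω ∂ℓ = ∑ e, ∫ ω in cylinder (update x n e) (n + 1), g ω ∂ℓ := by
  rw [← iUnion_cylinder_update x n]
  refine integral_iUnion_fintype (fun e => measurableSet_cylinder _ _) (fun e e' he => ?_)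
    fun e => hg.integrableOn
  exact disjoint_cylinder_of_ne n.lt_succ_self (by simpa only [update_self] using he)

lemma setIntegral_cylinder_succ_eval [MeasurableSingletonClass E] (x : ℕ → E) (n : ℕ)
    (f : E → ℝ) :
    ∫ ω in cylinder x (n + 1), f (ω n) ∂ℓ = ℓ.real (cylinder x (n + 1)) * f (x n) := by
  rw [setIntegral_congr_fun (measurableSet_cylinder x (n + 1))
    fun ω hω => congrArg f (hω n n.lt_succ_self), setIntegral_const, smul_eq_mul]

lemma integrable_comp_eval [Finite E] [DiscreteMeasurableSpace E] [IsFiniteMeasure ℓ]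
    (f : E → ℝ) (t : ℕ) : Integrable (fun ω => f (ω t)) ℓ :=
  Integrable.comp_measurable .of_finite (measurable_pi_apply t)

end Cylinder

section PolicyChain

open Matrix Function

omit [DecidableEq A] [Nonempty S] [Nonempty A]

variable {π : S → A → ℝ} {P : A → S → S → ℝ}

lemma Mmat_mem_rowStochastic (hπ : IsPolicy π) (hP : IsTransition P) :
    Mmat π P ∈ rowStochastic ℝ S := by
  refine mem_rowStochastic_iff_sum.2 ⟨fun s s' => ?_, fun s => ?_⟩
  · exact Finset.sum_nonneg fun a _ => mul_nonneg (hπ.1 s a) (hP.1 a s s')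
  · simp only [Mmat, of_apply]
    rw [Finset.sum_comm]
    simp only [← Finset.mul_sum, hP.2, mul_one, hπ.2]

lemma Unichain.exists_isCesaroLimit (h : Unichain π P) :
    ∃ μ : S → ℝ, IsCesaroLimit (Mmat π P) (replicateRow S μ) := by
  obtain ⟨μ, hμ⟩ := h
  refine ⟨μ, tendsto_pi_nhds.2 fun s => tendsto_pi_nhds.2 fun s' => (hμ s s').congr fun T => ?_⟩
  rw [cesaroMean, Matrix.smul_apply, Matrix.sum_apply, smul_eq_mul, div_eq_inv_mul]

/-- The expectation of `f` over the action that the policy `π` takes in state `s`. -/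
def policyMean (π : S → A → ℝ) (f : S × A → ℝ) (s : S) : ℝ :=
  ∑ a, π s a * f (s, a)

/-- The Markov operator of the chain of state–action pairs: the expectation of `f` one step after
the pair `e`. -/
def pairStep (π : S → A → ℝ) (P : A → S → S → ℝ) (f : S × A → ℝ) (e : S × A) : ℝ :=
  ∑ s', P e.2 e.1 s' * policyMean π f s'

omit [DecidableEq S] in
lemma pairStep_apply (f : S × A → ℝ) (e : S × A) :
    pairStep π P f e = ∑ e' : S × A, P e.2 e.1 e'.1 * π e'.1 e'.2 * f e' := by
  simp only [pairStep, policyMean, Finset.mul_sum, Fintype.sum_prod_type, mul_assoc]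

omit [DecidableEq S] in
lemma policyMean_pairStep (f : S × A → ℝ) :
    policyMean π (pairStep π P f) = Mmat π P *ᵥ policyMean π f := by
  ext s
  calc policyMean π (pairStep π P f) s
      = ∑ a, ∑ s', π s a * P a s s' * policyMean π f s' := by
        simp only [policyMean, pairStep, Finset.mul_sum, mul_assoc]
    _ = ∑ s', ∑ a, π s a * P a s s' * policyMean π f s' := Finset.sum_comm
    _ = (Mmat π P *ᵥ policyMean π f) s := by
        simp only [mulVec, dotProduct, Mmat, of_apply, Finset.sum_mul]

lemma policyMean_pairStep_iterate (f : S × A → ℝ) (k : ℕ) :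
    policyMean π ((pairStep π P)^[k] f) = Mmat π P ^ k *ᵥ policyMean π f := by
  induction k with
  | zero => rw [iterate_zero_apply, pow_zero, one_mulVec]
  | succ k ih => rw [iterate_succ_apply', policyMean_pairStep, ih, mulVec_mulVec, pow_succ']

end PolicyChain

section MarkovPrefix

open Matrix PiNat Function

omit [Fintype S] [Fintype A] [Nonempty S] [Nonempty A]

instance : DiscreteMeasurableSpace (S × A) := ⟨fun _ => trivial⟩

namespace IsMarkovPrefixFamily

variable {π : S → A → ℝ} {P : A → S → S → ℝ}
  {L : List (S × A) × S → Measure (ℕ → S × A)} {l : List (S × A)} {z : S}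

lemma measureReal_cylinder (hfam : IsMarkovPrefixFamily π P L) {n : ℕ} (hn : l.length ≤ n)
    (x : ℕ → S × A) :
    (L (l, z)).real (cylinder x (n + 1)) =
      (if (∀ t : Fin l.length, x t = l.get t) ∧ (x l.length).1 = z then (1 : ℝ) else 0) *
        (π (x l.length).1 (x l.length).2 *
          ∏ k ∈ Finset.Ico l.length n,
            (P (x k).2 (x k).1 (x (k + 1)).1 * π (x (k + 1)).1 (x (k + 1)).2)) := by
  simpa only [PiNat.cylinder, Nat.lt_succ_iff, measureReal_def] using hfam l z n hn x

lemma measureReal_cylinder_add_two (hfam : IsMarkovPrefixFamily π P L) {n : ℕ}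
    (hn : l.length ≤ n) (x : ℕ → S × A) :
    (L (l, z)).real (cylinder x (n + 2)) = (L (l, z)).real (cylinder x (n + 1)) *
      (P (x n).2 (x n).1 (x (n + 1)).1 * π (x (n + 1)).1 (x (n + 1)).2) := by
  rw [hfam.measureReal_cylinder (n := n + 1) (hn.trans n.le_succ), hfam.measureReal_cylinder hn,
    Finset.prod_Ico_succ_top hn]
  ring

lemma measureReal_cylinder_prefixPath (hfam : IsMarkovPrefixFamily π P L) (l : List (S × A))
    (z : S) (a : A) :
    (L (l, z)).real (cylinder (prefixPath l (z, a)) (l.length + 1)) = π z a := by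
  rw [hfam.measureReal_cylinder le_rfl]
  simp only [prefixPath_val, prefixPath_length, implies_true, and_self, if_true, Finset.Ico_self,
    Finset.prod_empty, mul_one, one_mul]

variable [Fintype A]

lemma ae_mem_iUnion_cylinder (hfam : IsMarkovPrefixFamily π P L) (hπ : IsPolicy π)
    [IsProbabilityMeasure (L (l, z))] :
    ∀ᵐ ω ∂L (l, z), ω ∈ ⋃ a, cylinder (prefixPath l (z, a)) (l.length + 1) := by
  refine (mem_ae_iff_prob_eq_one (.iUnion fun a => measurableSet_cylinder _ _)).2 ?_
  rw [← ENNReal.toReal_eq_one_iff, ← measureReal_def,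
    measureReal_iUnion_fintype (pairwise_disjoint_cylinder_prefixPath (Prod.mk_right_injective z) l)
      fun a => measurableSet_cylinder _ _]
  simp only [hfam.measureReal_cylinder_prefixPath, hπ.2]

lemma integral_eval_of_lt (hfam : IsMarkovPrefixFamily π P L) (hπ : IsPolicy π)
    [IsProbabilityMeasure (L (l, z))] (f : S × A → ℝ) (t : Fin l.length) :
    ∫ ω, f (ω t) ∂L (l, z) = f (l.get t) := by
  have hprefix : (fun ω : ℕ → S × A => f (ω t)) =ᵐ[L (l, z)] fun _ => f (l.get t) := by
    filter_upwards [hfam.ae_mem_iUnion_cylinder hπ] with ω hω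
    obtain ⟨a, ha⟩ := Set.mem_iUnion.1 hω
    rw [ha t (t.2.trans l.length.lt_succ_self), prefixPath_val]
  rw [integral_congr_ae hprefix, integral_const, probReal_univ, one_smul]

variable [Fintype S]

lemma setIntegral_cylinder_add (hfam : IsMarkovPrefixFamily π P L) [IsFiniteMeasure (L (l, z))]
    {n : ℕ} (hn : l.length ≤ n) (x : ℕ → S × A) (f : S × A → ℝ) (k : ℕ) :
    ∫ ω in cylinder x (n + 1), f (ω (n + k)) ∂L (l, z) =
      (L (l, z)).real (cylinder x (n + 1)) * (pairStep π P)^[k] f (x n) := by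
  induction k generalizing n x with
  | zero => exact setIntegral_cylinder_succ_eval x n f
  | succ k ih =>
    have hnext (e : S × A) :
        (L (l, z)).real (cylinder (update x (n + 1) e) (n + 2)) =
          (L (l, z)).real (cylinder x (n + 1)) * (P (x n).2 (x n).1 e.1 * π e.1 e.2) := by
      rw [hfam.measureReal_cylinder_add_two hn, update_self, update_of_ne n.lt_succ_self.ne,
        mem_cylinder_iff_eq.1 (update_mem_cylinder x (n + 1) e)]
    have htime : n + (k + 1) = n + 1 + k := by omega
    calc ∫ ω in cylinder x (n + 1), f (ω (n + (k + 1))) ∂L (l, z)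
        = ∑ e, ∫ ω in cylinder (update x (n + 1) e) (n + 2), f (ω (n + 1 + k)) ∂L (l, z) := by
          rw [htime, setIntegral_cylinder_eq_sum (integrable_comp_eval f _)]
      _ = ∑ e, (L (l, z)).real (cylinder x (n + 1)) * (P (x n).2 (x n).1 e.1 * π e.1 e.2) *
            (pairStep π P)^[k] f e := by
          refine Finset.sum_congr rfl fun e _ => ?_
          rw [ih (hn.trans n.le_succ), hnext, update_self]
      _ = (L (l, z)).real (cylinder x (n + 1)) * (pairStep π P)^[k + 1] f (x n) := by
          simp only [iterate_succ_apply', pairStep_apply, Finset.mul_sum, mul_assoc]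

lemma integral_eval_add_length (hfam : IsMarkovPrefixFamily π P L) (hπ : IsPolicy π)
    [IsProbabilityMeasure (L (l, z))] (f : S × A → ℝ) (k : ℕ) :
    ∫ ω, f (ω (k + l.length)) ∂L (l, z) = (Mmat π P ^ k *ᵥ policyMean π f) z := by
  rw [← Measure.restrict_eq_self_of_ae_mem (hfam.ae_mem_iUnion_cylinder hπ),
    integral_iUnion_fintype (fun a => measurableSet_cylinder _ _)
      (pairwise_disjoint_cylinder_prefixPath (Prod.mk_right_injective z) l)
      fun a => (integrable_comp_eval f _).integrableOn,
    ← policyMean_pairStep_iterate]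
  refine Finset.sum_congr rfl fun a _ => ?_
  rw [add_comm k, hfam.setIntegral_cylinder_add le_rfl, hfam.measureReal_cylinder_prefixPath,
    prefixPath_length]

lemma vdisc_eq (hfam : IsMarkovPrefixFamily π P L) (hπ : IsPolicy π) (hP : IsTransition P)
    [IsProbabilityMeasure (L (l, z))] (r : S × A → ℝ) {γ : ℝ} (hγ : |γ| < 1) :
    vdisc (L (l, z)) r γ = γ ^ l.length * ((1 - γ • Mmat π P)⁻¹ʳ *ᵥ policyMean π r) z +
      ∑ t : Fin l.length, γ ^ (t : ℕ) * r (l.get t) := by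
  have htail : HasSum
      (fun k : ℕ => γ ^ (k + l.length) * ∫ ω, r (ω (k + l.length)) ∂L (l, z))
      (γ ^ l.length * ((1 - γ • Mmat π P)⁻¹ʳ *ᵥ policyMean π r) z) := by
    refine ((hasSum_pow_mul_pow_mulVec (Mmat_mem_rowStochastic hπ hP) hγ
      (policyMean π r) z).mul_left (γ ^ l.length)).congr_fun fun k => ?_
    rw [hfam.integral_eval_add_length hπ, pow_add]
    ring
  have hsum := ((hasSum_nat_add_iff
    (f := fun t => γ ^ t * ∫ ω, r (ω t) ∂L (l, z)) l.length).1 htail).tsum_eq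
  rw [vdisc, hsum, Finset.sum_range]
  simp only [hfam.integral_eval_of_lt hπ]

lemma tendsto_vdisc_sub (hfam : IsMarkovPrefixFamily π P L) (hπ : IsPolicy π)
    (hP : IsTransition P) {μ : S → ℝ} (hμ : IsCesaroLimit (Mmat π P) (replicateRow S μ))
    (r : S × A → ℝ) (h : List (S × A) × S) [IsProbabilityMeasure (L h)] :
    Tendsto (fun γ : ℝ => vdisc (L h) r γ - μ ⬝ᵥ policyMean π r / (1 - γ)) (𝓝[<] 1)
      (𝓝 (Breturn (fun e => r e - μ ⬝ᵥ policyMean π r)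
        (deviation (Mmat π P) (replicateRow S μ) *ᵥ policyMean π r) h)) := by
  obtain ⟨l, z⟩ := h
  set ρ := μ ⬝ᵥ policyMean π r
  have hpow (k : ℕ) : Tendsto (fun γ : ℝ => γ ^ k) (𝓝[<] 1) (𝓝 1) := by
    simpa using ((continuous_pow k).tendsto (1 : ℝ)).mono_left nhdsWithin_le_nhds
  have hprefix : Tendsto (fun γ : ℝ => ∑ t : Fin l.length, γ ^ (t : ℕ) * (r (l.get t) - ρ))
      (𝓝[<] 1) (𝓝 (l.map fun e => r e - ρ).sum) := by
    rw [← Fin.sum_univ_fun_getElem]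
    exact tendsto_finsetSum _ fun t _ => by simpa using (hpow t).mul_const (r (l.get t) - ρ)
  have htail : Tendsto
      (fun γ : ℝ => γ ^ l.length *
        (((1 - γ • Mmat π P)⁻¹ʳ *ᵥ policyMean π r) z - ρ / (1 - γ)))
      (𝓝[<] 1) (𝓝 ((deviation (Mmat π P) (replicateRow S μ) *ᵥ policyMean π r) z)) := by
    simpa using (hpow l.length).mul
      ((hμ.tendsto_inverse_mulVec_sub (policyMean π r) z).mono_left (nhdsLT_le_nhdsNE 1))
  refine (hprefix.add htail).congr' ?_
  filter_upwards [Ioo_mem_nhdsLT (by norm_num : (-1 : ℝ) < 1)] with γ hγ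
  have hgeom : ∑ t : Fin l.length, γ ^ (t : ℕ) = (1 - γ ^ l.length) / (1 - γ) := by
    rw [← Finset.sum_range fun t => γ ^ t, eq_div_iff (sub_pos.2 hγ.2).ne', geom_sum_mul_neg]
  rw [hfam.vdisc_eq hπ hP r (abs_lt.2 hγ)]
  simp only [mul_sub, Finset.sum_sub_distrib, ← Finset.sum_mul, hgeom]
  ring

end IsMarkovPrefixFamily

end MarkovPrefix

/-- **Alignment Theorem, part 1 (existence of a bootstrapped-return representation).**
Under Axiom 1 (some reward `r*` expresses `⪰`) and Axiom 2 (a unichain pair `(π,P)` and a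
Markov prefix family `(ℓ_h) ⊆ ℒ∞` with `h ⪰∂ h' ↔ ℓ_h ⪰ ℓ_{h'}`), there exist `r` and `V`
such that for all partial trajectories `h, h'`: `h ⪰∂ h' ↔ B(r,V)(h) ≥ B(r,V)(h')`. -/
theorem alignment_theorem_part1
    (pref : Measure (ℕ → S × A) → Measure (ℕ → S × A) → Prop)
    (prefP : List (S × A) × S → List (S × A) × S → Prop)
    (rstar : S × A → ℝ) (hax1 : Expresses rstar pref)
    (π : S → A → ℝ) (P : A → S → S → ℝ)
    (hπ : IsPolicy π) (hP : IsTransition P)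
    (huni : Unichain π P)
    (L : List (S × A) × S → Measure (ℕ → S × A))
    (hfam : IsMarkovPrefixFamily π P L)
    (hmem : ∀ h, MemLinf (L h))
    (hax2 : ∀ h h', prefP h h' ↔ pref (L h) (L h')) :
    ∃ (r : S × A → ℝ) (V : S → ℝ),
      ∀ h h', prefP h h' ↔ Breturn r V h' ≤ Breturn r V h := by
  obtain ⟨μ, hμ⟩ := huni.exists_isCesaroLimit
  set ρ := μ ⬝ᵥ policyMean π rstar
  set u := deviation (Mmat π P) (Matrix.replicateRow S μ) *ᵥ policyMean π rstar
  refine ⟨fun e => rstar e - ρ, u, fun h h' => ?_⟩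
  have := (hmem h).1
  have := (hmem h').1
  have hlim : Tendsto (fun γ : ℝ => vdisc (L h) rstar γ - vdisc (L h') rstar γ) (𝓝[<] 1)
      (𝓝 (Breturn (fun e => rstar e - ρ) u h - Breturn (fun e => rstar e - ρ) u h')) := by
    simpa only [sub_sub_sub_cancel_right] using
      (hfam.tendsto_vdisc_sub hπ hP hμ rstar h).sub (hfam.tendsto_vdisc_sub hπ hP hμ rstar h')
  rw [hax2, hax1 _ _ (hmem h) (hmem h'), ← sub_nonneg]
  refine ⟨fun ⟨c, hc, hc_lim⟩ => ?_, fun hc => ⟨_, hc, hlim⟩⟩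
  rwa [tendsto_nhds_unique hlim hc_lim]
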